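/- Let V ≥ 2 and D ≥ 1 be natural numbers and ρ > 0 a real number. Let u : Fin V → ℝ be any vector with Euclidean norm ‖u‖₂ ≤ ρ·√D, and set γ = exp(−ρ·√(D·V/(V−1))). Then the Shannon entropy of the softmax distribution of u satisfies H(softmax(u)) ≥ log(1 + (V−1)·γ) + ρ·γ·√(D·V·(V−1)) / (1 + (V−1)·γ). -/

import Mathlib

open Real Finset

/-!
As `t` grows from `0`, the entropy of `softmax (t • u)` decreases at the rate
`t * Var(u)`, where `t ^ 2 * Var(u)` is the variance of the log-probabilities.
Among all distributions of a given entropy, that variance is largest for a distribution that is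
uniform except for one heavier atom, i.e. for the softmax of a vector with a single nonzero entry.
Hence the entropy along `t ↦ softmax (t • u)` cannot fall below the entropy along the ray of such
one-peaked vectors that starts with at least the same variance at `t = 0`, and for those the
entropy is explicit.
-/

section ExpRemainder

/-- The first-order Taylor remainder of `exp` at `0`, whose comparison with `x ^ 2` drives the
extremality of one-peaked distributions. -/
noncomputable def expRemainder (x : ℝ) : ℝ := exp x - 1 - x

lemma expRemainder_pos {x : ℝ} (hx : x ≠ 0) : 0 < expRemainder x := by
  unfold expRemainder
  linarith [add_one_lt_exp hx]

lemma expRemainder_eq_sq_mul_integral (x : ℝ) :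
    expRemainder x = x ^ 2 * ∫ θ in (0 : ℝ)..1, (1 - θ) * exp (θ * x) := by
  have hderiv (θ : ℝ) : HasDerivAt (fun θ ↦ (1 + x * (1 - θ)) * exp (θ * x))
      (x ^ 2 * ((1 - θ) * exp (θ * x))) θ := by
    have hlin : HasDerivAt (fun θ ↦ 1 + x * (1 - θ)) (x * (-1)) θ :=
      (((hasDerivAt_id θ).const_sub 1).const_mul x).const_add 1
    have hexp : HasDerivAt (fun θ ↦ exp (θ * x)) (exp (θ * x) * x) θ :=
      (hasDerivAt_mul_const x).exp
    exact (hlin.mul hexp).congr_deriv (by ring)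
  have hint : IntervalIntegrable (fun θ ↦ x ^ 2 * ((1 - θ) * exp (θ * x)))
      MeasureTheory.volume 0 1 := by
    apply Continuous.intervalIntegrable
    fun_prop
  rw [← intervalIntegral.integral_const_mul,
    intervalIntegral.integral_eq_sub_of_hasDerivAt (fun θ _ ↦ hderiv θ) hint]
  simp only [expRemainder, one_mul, zero_mul, sub_self, mul_zero, add_zero, sub_zero, mul_one,
    exp_zero]
  ring

/-- This is the monotonicity of `expRemainder x / x ^ 2`, cleared of denominators. -/
lemma sq_mul_expRemainder_le {x y : ℝ} (hxy : x ≤ y) :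
    y ^ 2 * expRemainder x ≤ x ^ 2 * expRemainder y := by
  have hmono : ∫ θ in (0 : ℝ)..1, (1 - θ) * exp (θ * x) ≤
      ∫ θ in (0 : ℝ)..1, (1 - θ) * exp (θ * y) := by
    refine intervalIntegral.integral_mono_on zero_le_one
      (Continuous.intervalIntegrable (by fun_prop) _ _)
      (Continuous.intervalIntegrable (by fun_prop) _ _) fun θ hθ ↦ ?_
    have h1θ : 0 ≤ 1 - θ := sub_nonneg.2 hθ.2
    have h0θ : 0 ≤ θ := hθ.1
    gcongr
  rw [expRemainder_eq_sq_mul_integral, expRemainder_eq_sq_mul_integral, mul_left_comm]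
  gcongr

end ExpRemainder

/-- The derivative of `g` vanishes at the left end point, so the positivity of `h 0` is what gets
`g` off the barrier `0`. -/
lemma nonneg_of_hasDerivAt_mul {g h : ℝ → ℝ} {b : ℝ} (hb : 0 < b)
    (hg : ∀ t, HasDerivAt g (t * h t) t) (hg0 : 0 ≤ g 0)
    (hh : ContinuousAt h 0) (hh0 : 0 < h 0)
    (hpos : ∀ t, 0 < t → g t = 0 → 0 < h t) : 0 ≤ g b := by
  have hcont : Continuous g := continuous_iff_continuousAt.2 fun t ↦ (hg t).continuousAt
  obtain ⟨e, he, hball⟩ := Metric.eventually_nhds_iff.1 (hh.eventually_const_lt hh0)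
  obtain ⟨d, hd0, hd⟩ := exists_between (lt_min he hb)
  obtain ⟨hde, hdb⟩ := lt_min_iff.1 hd
  have hgd : 0 ≤ g d := by
    refine hg0.trans (monotoneOn_of_deriv_nonneg (convex_Icc 0 d) hcont.continuousOn
      (fun t _ ↦ (hg t).differentiableAt.differentiableWithinAt) (fun t ht ↦ ?_)
      (Set.left_mem_Icc.2 hd0.le) (Set.right_mem_Icc.2 hd0.le) hd0.le)
    rw [interior_Icc] at ht
    rw [(hg t).deriv]
    have hte : dist t 0 < e := by
      rw [dist_zero_right, norm_of_nonneg ht.1.le]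
      exact ht.2.trans hde
    exact (mul_pos ht.1 (hball hte)).le
  have hfence := image_le_of_deriv_right_lt_deriv_boundary (f := fun t ↦ -g t) (B := fun _ ↦ 0)
    (a := d) (b := b) hcont.neg.continuousOn (fun t _ ↦ (hg t).neg.hasDerivWithinAt)
    (neg_nonpos.2 hgd) (fun t ↦ hasDerivAt_const t 0)
    (fun t ht hgt ↦ neg_neg_of_pos <|
      mul_pos (hd0.trans_le ht.1) (hpos t (hd0.trans_le ht.1) (neg_eq_zero.1 hgt)))
    (Set.right_mem_Icc.2 hdb.le)
  exact neg_nonpos.1 hfence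

lemma smul_single_one {ι : Type*} [DecidableEq ι] (k : ι) (y : ℝ) :
    y • (Pi.single k 1 : ι → ℝ) = Pi.single k y := by
  rw [← Pi.single_smul, smul_eq_mul, mul_one]

section SoftmaxEntropy

variable {ι : Type*} [Fintype ι]

section WeightedVariance

/-- The variance of `f` under the probability weights `p`. -/
noncomputable def weightedVariance (p f : ι → ℝ) : ℝ :=
  ∑ i, p i * (f i - ∑ j, p j * f j) ^ 2

variable {p : ι → ℝ}

lemma weightedVariance_smul (p f : ι → ℝ) (t : ℝ) :
    weightedVariance p (t • f) = t ^ 2 * weightedVariance p f := by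
  have hmean : ∑ j, p j * (t * f j) = t * ∑ j, p j * f j := by
    rw [mul_sum]
    exact sum_congr rfl fun j _ ↦ by ring
  simp only [weightedVariance, Pi.smul_apply, smul_eq_mul, hmean]
  rw [mul_sum univ _ (t ^ 2)]
  exact sum_congr rfl fun i _ ↦ by ring

lemma weightedVariance_sub_const (hp : ∑ i, p i = 1) (f : ι → ℝ) (c : ℝ) :
    weightedVariance p (fun i ↦ f i - c) = weightedVariance p f := by
  simp only [weightedVariance, mul_sub, sum_sub_distrib, ← sum_mul, hp, one_mul,
    sub_sub_sub_cancel_right]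

lemma weightedVariance_eq_sub (hp : ∑ i, p i = 1) (f : ι → ℝ) :
    weightedVariance p f = ∑ i, p i * f i ^ 2 - (∑ i, p i * f i) ^ 2 := by
  unfold weightedVariance
  set μ := ∑ i, p i * f i with hμ
  have hexpand (i : ι) : p i * (f i - μ) ^ 2 =
      p i * f i ^ 2 - 2 * μ * (p i * f i) + p i * μ ^ 2 := by ring
  simp only [hexpand, sum_add_distrib, sum_sub_distrib, ← mul_sum, ← sum_mul, ← hμ, hp]
  ring

lemma weightedVariance_le_sum_sq_sub (hp : ∑ i, p i = 1) (f : ι → ℝ) (m : ℝ) :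
    weightedVariance p f ≤ ∑ i, p i * (f i - m) ^ 2 := by
  rw [← weightedVariance_sub_const hp f m, weightedVariance_eq_sub hp]
  exact sub_le_self _ (sq_nonneg _)

lemma weightedVariance_pos (hp : ∀ i, 0 < p i) {f : ι → ℝ} {i j : ι} (hij : f i ≠ f j) :
    0 < weightedVariance p f := by
  obtain ⟨k, hk⟩ : ∃ k, f k ≠ ∑ l, p l * f l := by
    by_contra! hconst
    exact hij ((hconst i).trans (hconst j).symm)
  exact sum_pos' (fun l _ ↦ mul_nonneg (hp l).le (sq_nonneg _))
    ⟨k, mem_univ k, mul_pos (hp k) (sq_pos_of_ne_zero (sub_ne_zero.2 hk))⟩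

end WeightedVariance

section ShannonEntropy

/-- The Shannon entropy, in nats, of the probability vector `p`. -/
noncomputable def shannonEntropy (p : ι → ℝ) : ℝ := -∑ i, p i * log (p i)

variable {p q : ι → ℝ}

lemma shannonEntropy_le_crossEntropy (hp : ∀ i, 0 < p i) (hq : ∀ i, 0 < q i)
    (hpq : ∑ i, q i ≤ ∑ i, p i) : shannonEntropy p ≤ -∑ i, p i * log (q i) := by
  have hterm (i : ι) : p i * log (q i) - p i * log (p i) ≤ q i - p i := by
    have hlog := log_le_sub_one_of_pos (div_pos (hq i) (hp i))
    rw [log_div (hq i).ne' (hp i).ne'] at hlog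
    calc p i * log (q i) - p i * log (p i) = p i * (log (q i) - log (p i)) := by ring
      _ ≤ p i * (q i / p i - 1) := mul_le_mul_of_nonneg_left hlog (hp i).le
      _ = q i - p i := by rw [mul_sub, mul_div_cancel₀ _ (hp i).ne', mul_one]
  have hsum := sum_le_sum fun i (_ : i ∈ univ) ↦ hterm i
  simp only [sum_sub_distrib] at hsum
  unfold shannonEntropy
  linarith

/-- The left-hand side depends on `p` only through its entropy: the mean of `1 / p i` is the
number of atoms. -/
lemma sum_mul_expRemainder_sub_log (hp : ∀ i, 0 < p i) (hp1 : ∑ i, p i = 1) (c : ℝ) :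
    ∑ i, p i * expRemainder (c - log (p i)) =
      Fintype.card ι * exp c - 1 - c - shannonEntropy p := by
  have hterm (i : ι) : p i * expRemainder (c - log (p i)) =
      exp c - p i - p i * c + p i * log (p i) := by
    rw [expRemainder, exp_sub, exp_log (hp i)]
    field_simp [(hp i).ne']
    ring
  simp only [hterm, sum_add_distrib, sum_sub_distrib, ← sum_mul, hp1, sum_const, card_univ,
    nsmul_eq_mul, shannonEntropy]
  ring

end ShannonEntropy

section Softmax

/-- The Gibbs distribution with logits `u`. -/
noncomputable def softmax (u : ι → ℝ) (i : ι) : ℝ := exp (u i) / ∑ j, exp (u j)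

/-- The log-partition function of `softmax u`. -/
noncomputable def logSumExp (u : ι → ℝ) : ℝ := log (∑ j, exp (u j))

lemma softmax_zero : softmax (0 : ι → ℝ) = fun _ ↦ (Fintype.card ι : ℝ)⁻¹ := by
  ext i
  simp [softmax]

variable [Nonempty ι]

lemma sum_exp_pos (u : ι → ℝ) : 0 < ∑ j, exp (u j) :=
  sum_pos (fun j _ ↦ exp_pos (u j)) univ_nonempty

lemma softmax_pos (u : ι → ℝ) (i : ι) : 0 < softmax u i :=
  div_pos (exp_pos _) (sum_exp_pos u)

lemma sum_softmax (u : ι → ℝ) : ∑ i, softmax u i = 1 := by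
  simp only [softmax, ← sum_div, div_self (sum_exp_pos u).ne']

lemma softmax_eq_exp (u : ι → ℝ) (i : ι) : softmax u i = exp (u i - logSumExp u) := by
  rw [softmax, logSumExp, exp_sub, exp_log (sum_exp_pos u)]

lemma log_softmax (u : ι → ℝ) (i : ι) : log (softmax u i) = u i - logSumExp u := by
  rw [softmax_eq_exp, log_exp]

lemma sum_mul_log_softmax {p : ι → ℝ} (hp : ∑ i, p i = 1) (u : ι → ℝ) :
    ∑ i, p i * log (softmax u i) = ∑ i, p i * u i - logSumExp u := by
  simp only [log_softmax, mul_sub, sum_sub_distrib, ← sum_mul, hp, one_mul]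

lemma shannonEntropy_softmax (u : ι → ℝ) :
    shannonEntropy (softmax u) = logSumExp u - ∑ i, softmax u i * u i := by
  rw [shannonEntropy, sum_mul_log_softmax (sum_softmax u), neg_sub]

lemma weightedVariance_log_softmax_smul (t : ℝ) (u : ι → ℝ) :
    weightedVariance (softmax (t • u)) (fun i ↦ log (softmax (t • u) i)) =
      t ^ 2 * weightedVariance (softmax (t • u)) u := by
  simp only [log_softmax]
  rw [weightedVariance_sub_const (sum_softmax _), weightedVariance_smul]

lemma weightedVariance_softmax_zero_le (u : ι → ℝ) (m : ℝ) :
    weightedVariance (softmax 0) u ≤ (∑ i, (u i - m) ^ 2) / Fintype.card ι := by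
  refine (weightedVariance_le_sum_sq_sub (sum_softmax 0) u m).trans_eq ?_
  rw [softmax_zero, ← mul_sum, div_eq_inv_mul]

lemma continuous_softmax : Continuous (softmax : (ι → ℝ) → ι → ℝ) := by
  have hne (u : ι → ℝ) : ∑ j, exp (u j) ≠ 0 := (sum_exp_pos u).ne'
  unfold softmax
  fun_prop (disch := exact hne _)

lemma continuous_weightedVariance_softmax_smul (u : ι → ℝ) :
    Continuous fun t : ℝ ↦ weightedVariance (softmax (t • u)) u := by
  have hsoftmax (i : ι) : Continuous fun t : ℝ ↦ softmax (t • u) i :=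
    (continuous_apply i).comp (continuous_softmax.comp (by fun_prop))
  unfold weightedVariance
  fun_prop

lemma hasDerivAt_logSumExp_smul (u : ι → ℝ) (t : ℝ) :
    HasDerivAt (fun t : ℝ ↦ logSumExp (t • u)) (∑ i, softmax (t • u) i * u i) t := by
  have hsum : HasDerivAt (fun t : ℝ ↦ ∑ i, exp ((t • u) i)) (∑ i, exp ((t • u) i) * u i) t :=
    HasDerivAt.fun_sum fun i _ ↦ (hasDerivAt_mul_const (u i)).exp
  refine (hsum.log (sum_exp_pos _).ne').congr_deriv ?_
  rw [sum_div]
  exact sum_congr rfl fun i _ ↦ mul_div_right_comm _ _ _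

lemma hasDerivAt_softmax_smul (u : ι → ℝ) (i : ι) (t : ℝ) :
    HasDerivAt (fun t : ℝ ↦ softmax (t • u) i)
      (softmax (t • u) i * (u i - ∑ j, softmax (t • u) j * u j)) t := by
  simp only [softmax_eq_exp _ i]
  exact ((hasDerivAt_mul_const (u i)).sub (hasDerivAt_logSumExp_smul u t)).exp

lemma hasDerivAt_sum_softmax_smul_mul (u : ι → ℝ) (t : ℝ) :
    HasDerivAt (fun t : ℝ ↦ ∑ i, softmax (t • u) i * u i)
      (weightedVariance (softmax (t • u)) u) t := by
  refine (HasDerivAt.fun_sum fun i _ ↦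
    (hasDerivAt_softmax_smul u i t).mul_const (u i)).congr_deriv ?_
  rw [weightedVariance_eq_sub (sum_softmax _), sq (∑ i, _), sum_mul, ← sum_sub_distrib]
  exact sum_congr rfl fun i _ ↦ by ring

lemma hasDerivAt_shannonEntropy_softmax_smul (u : ι → ℝ) (t : ℝ) :
    HasDerivAt (fun t : ℝ ↦ shannonEntropy (softmax (t • u)))
      (-(t * weightedVariance (softmax (t • u)) u)) t := by
  have hentropy (t : ℝ) : shannonEntropy (softmax (t • u)) =
      logSumExp (t • u) - t * ∑ i, softmax (t • u) i * u i := by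
    rw [shannonEntropy_softmax, mul_sum]
    congr 1
    exact sum_congr rfl fun i _ ↦ mul_left_comm _ _ _
  simp only [hentropy]
  refine ((hasDerivAt_logSumExp_smul u t).sub
    ((hasDerivAt_id t).mul (hasDerivAt_sum_softmax_smul_mul u t))).congr_deriv ?_
  simp only [id, one_mul]
  ring

end Softmax

section OnePeaked

variable [DecidableEq ι]

lemma sum_exp_single (k : ι) (y : ℝ) :
    ∑ j, exp ((Pi.single k y : ι → ℝ) j) = exp y + (Fintype.card ι - 1) := by
  have hterm (j : ι) : exp ((Pi.single k y : ι → ℝ) j) =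
      (Pi.single k (exp y - 1) : ι → ℝ) j + 1 := by
    rcases eq_or_ne j k with rfl | hjk <;> simp [*]
  simp only [hterm, sum_add_distrib, sum_pi_single', mem_univ, if_true, sum_const, card_univ,
    nsmul_eq_mul, mul_one]
  ring

lemma sum_mul_comp_single (p : ι → ℝ) (k : ι) (y : ℝ) {F : ℝ → ℝ} (hF : F 0 = 0) :
    ∑ i, p i * F ((Pi.single k y : ι → ℝ) i) = p k * F y := by
  simp [Pi.single_apply, apply_ite F, hF]

lemma sum_mul_single (p : ι → ℝ) (k : ι) (y : ℝ) :
    ∑ i, p i * (Pi.single k y : ι → ℝ) i = p k * y :=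
  sum_mul_comp_single p k y (F := id) rfl

variable [Nonempty ι]

lemma shannonEntropy_softmax_single (k : ι) (y : ℝ) :
    shannonEntropy (softmax (Pi.single k y)) =
      log (1 + (Fintype.card ι - 1) * exp (-y)) +
        (Fintype.card ι - 1) * y * exp (-y) / (1 + (Fintype.card ι - 1) * exp (-y)) := by
  have hcard : (1 : ℝ) ≤ Fintype.card ι := by exact_mod_cast Fintype.card_pos
  set N : ℝ := Fintype.card ι - 1 with hN
  have hN0 : 0 ≤ N := sub_nonneg.2 hcard
  have hZ : exp y + N = exp y * (1 + N * exp (-y)) := by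
    rw [mul_add, mul_left_comm, ← exp_add, add_neg_cancel, exp_zero, mul_one, mul_one]
  have hQ : 0 < 1 + N * exp (-y) := by positivity
  rw [shannonEntropy_softmax, sum_mul_single, logSumExp, softmax, sum_exp_single, ← hN,
    Pi.single_eq_same, hZ, log_mul (exp_ne_zero y) hQ.ne', log_exp,
    div_mul_cancel_left₀ (exp_ne_zero y)]
  field_simp
  ring

variable {p : ι → ℝ} {k : ι} {y : ℝ}

/-- Gibbs' inequality against the one-peaked distribution with its peak moved to `i`. -/
lemma le_softmax_single_of_shannonEntropy_eq (hp : ∀ i, 0 < p i) (hp1 : ∑ i, p i = 1)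
    (hy : 0 < y) (hH : shannonEntropy p = shannonEntropy (softmax (Pi.single k y))) (i : ι) :
    p i ≤ softmax (Pi.single k y) k := by
  have hgibbs := shannonEntropy_le_crossEntropy hp (softmax_pos (Pi.single i y))
    (by rw [sum_softmax, hp1])
  have hZ : logSumExp (Pi.single i y) = logSumExp (Pi.single k y) := by
    simp only [logSumExp, sum_exp_single]
  rw [hH, shannonEntropy_softmax, sum_mul_log_softmax hp1, sum_mul_single, sum_mul_single,
    hZ] at hgibbs
  exact le_of_mul_le_mul_right (by linarith) hy

lemma sum_mul_sq_log_add_logSumExp_le (hp : ∀ i, 0 < p i) (hp1 : ∑ i, p i = 1)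
    (hy : 0 < y) (hH : shannonEntropy p = shannonEntropy (softmax (Pi.single k y))) :
    ∑ i, p i * (log (p i) + logSumExp (Pi.single k y)) ^ 2 ≤
      softmax (Pi.single k y) k * y ^ 2 := by
  set q := softmax (Pi.single k y)
  set c := -logSumExp (Pi.single k y)
  have hqc (i : ι) : c - log (q i) = -(Pi.single k y : ι → ℝ) i := by
    rw [log_softmax]
    ring
  have hlower (i : ι) : -y ≤ c - log (p i) := by
    have hlog := log_le_log (hp i) (le_softmax_single_of_shannonEntropy_eq hp hp1 hy hH i)
    have hpeak := hqc k
    rw [Pi.single_eq_same] at hpeak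
    linarith
  have hremainder : ∑ i, p i * expRemainder (c - log (p i)) = q k * expRemainder (-y) := by
    rw [sum_mul_expRemainder_sub_log hp hp1, hH,
      ← sum_mul_expRemainder_sub_log (p := q) (softmax_pos _) (sum_softmax _)]
    simp only [hqc]
    exact sum_mul_comp_single q k y (F := fun x ↦ expRemainder (-x)) (by simp [expRemainder])
  refine le_of_mul_le_mul_right ?_ (expRemainder_pos (neg_ne_zero.2 hy.ne'))
  calc (∑ i, p i * (log (p i) + logSumExp (Pi.single k y)) ^ 2) * expRemainder (-y)
      = ∑ i, p i * ((c - log (p i)) ^ 2 * expRemainder (-y)) := by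
        rw [sum_mul]
        exact sum_congr rfl fun i _ ↦ by ring
    _ ≤ ∑ i, p i * ((-y) ^ 2 * expRemainder (c - log (p i))) :=
        sum_le_sum fun i _ ↦
          mul_le_mul_of_nonneg_left (sq_mul_expRemainder_le (hlower i)) (hp i).le
    _ = (-y) ^ 2 * ∑ i, p i * expRemainder (c - log (p i)) := by
        rw [mul_sum]
        exact sum_congr rfl fun i _ ↦ mul_left_comm _ _ _
    _ = q k * y ^ 2 * expRemainder (-y) := by
        rw [hremainder]
        ring

theorem weightedVariance_log_le_of_shannonEntropy_eq (hp : ∀ i, 0 < p i) (hp1 : ∑ i, p i = 1)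
    (hy : 0 < y) (hH : shannonEntropy p = shannonEntropy (softmax (Pi.single k y))) :
    weightedVariance p (fun i ↦ log (p i)) ≤
      weightedVariance (softmax (Pi.single k y)) (Pi.single k y) := by
  set q := softmax (Pi.single k y)
  set c := logSumExp (Pi.single k y)
  have hmean : ∑ i, p i * (log (p i) + c) = ∑ i, q i * (Pi.single k y : ι → ℝ) i := by
    rw [shannonEntropy_softmax, shannonEntropy] at hH
    simp only [mul_add, sum_add_distrib, ← sum_mul, hp1]
    linarith
  have hsq : ∑ i, q i * (Pi.single k y : ι → ℝ) i ^ 2 = q k * y ^ 2 :=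
    sum_mul_comp_single q k y (F := (· ^ 2)) (zero_pow two_ne_zero)
  rw [← weightedVariance_sub_const hp1 _ (-c), weightedVariance_eq_sub hp1,
    weightedVariance_eq_sub (sum_softmax _)]
  simp only [sub_neg_eq_add]
  rw [hmean, hsq]
  exact sub_le_sub_right (sum_mul_sq_log_add_logSumExp_le hp hp1 hy hH) _

lemma sq_mul_weightedVariance_softmax_smul_le {u : ι → ℝ} {t : ℝ} (hy : 0 < y)
    (hH : shannonEntropy (softmax (t • u)) = shannonEntropy (softmax (y • Pi.single k 1))) :
    t ^ 2 * weightedVariance (softmax (t • u)) u ≤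
      y ^ 2 * weightedVariance (softmax (y • Pi.single k 1)) (Pi.single k 1) := by
  rw [← weightedVariance_log_softmax_smul, ← weightedVariance_smul, smul_single_one]
  rw [smul_single_one] at hH
  exact weightedVariance_log_le_of_shannonEntropy_eq (softmax_pos _) (sum_softmax _) hy hH

lemma weightedVariance_softmax_zero_single (k : ι) :
    weightedVariance (softmax 0) (Pi.single k (1 : ℝ)) =
      (Fintype.card ι - 1) / (Fintype.card ι : ℝ) ^ 2 := by
  have hcard : (Fintype.card ι : ℝ) ≠ 0 := Nat.cast_ne_zero.2 Fintype.card_ne_zero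
  rw [weightedVariance_eq_sub (sum_softmax _), sum_mul_single,
    sum_mul_comp_single _ k 1 (F := (· ^ 2)) (zero_pow two_ne_zero), softmax_zero]
  field_simp

end OnePeaked

section Comparison

variable [DecidableEq ι] [Nontrivial ι] {u : ι → ℝ}

lemma weightedVariance_softmax_single_one_pos (w : ι → ℝ) (k : ι) :
    0 < weightedVariance (softmax w) (Pi.single k 1) := by
  obtain ⟨j, hj⟩ := exists_ne k
  refine weightedVariance_pos (softmax_pos w) (i := k) (j := j) ?_
  rw [Pi.single_eq_same, Pi.single_eq_of_ne hj]
  exact one_ne_zero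

/-- The two entropies are compared along `t • u` and the slightly accelerated path
`(t * (c + (d - c) * t)) • Pi.single k 1`: acceleration makes the extremal variance inequality
strict wherever the two entropies meet. -/
lemma shannonEntropy_softmax_smul_single_le_of_variance_lt (k : ι) {c d : ℝ} (hc : 0 < c)
    (hcd : c < d)
    (hvar : weightedVariance (softmax 0) u <
      c ^ 2 * weightedVariance (softmax 0) (Pi.single k 1)) :
    shannonEntropy (softmax (d • Pi.single k 1)) ≤ shannonEntropy (softmax u) := by
  set e : ι → ℝ := Pi.single k 1
  set r : ℝ → ℝ := fun t ↦ c + (d - c) * t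
  set gap : ℝ → ℝ := fun t ↦
    shannonEntropy (softmax (t • u)) - shannonEntropy (softmax ((t * r t) • e))
  set rate : ℝ → ℝ := fun t ↦
    r t * (r t + (d - c) * t) * weightedVariance (softmax ((t * r t) • e)) e -
      weightedVariance (softmax (t • u)) u
  have hr (t : ℝ) : HasDerivAt r (d - c) t :=
    (hasDerivAt_const_mul (d - c)).const_add c
  have hgap (t : ℝ) : HasDerivAt gap (t * rate t) t := by
    have hpeaked := (hasDerivAt_shannonEntropy_softmax_smul e (t * r t)).comp t
      ((hasDerivAt_id t).mul (hr t))
    refine ((hasDerivAt_shannonEntropy_softmax_smul u t).sub hpeaked).congr_deriv ?_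
    simp only [rate, id]
    ring
  have hrate : Continuous rate :=
    ((by fun_prop : Continuous fun t ↦ r t * (r t + (d - c) * t)).mul
      ((continuous_weightedVariance_softmax_smul e).comp (by fun_prop))).sub
      (continuous_weightedVariance_softmax_smul u)
  have hrate0 : 0 < rate 0 := by
    simpa [rate, r, ← sq] using hvar
  have hmeet (t : ℝ) (ht : 0 < t) (hzero : gap t = 0) : 0 < rate t := by
    have hdt : 0 < (d - c) * t := mul_pos (sub_pos.2 hcd) ht
    have hrt : 0 < r t := add_pos hc hdt
    have hextremal := sq_mul_weightedVariance_softmax_smul_le (mul_pos ht hrt)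
      (sub_eq_zero.1 hzero)
    rw [mul_pow, mul_assoc] at hextremal
    have hle := le_of_mul_le_mul_left hextremal (pow_pos ht 2)
    have hsurplus := mul_pos (mul_pos hrt hdt)
      (weightedVariance_softmax_single_one_pos ((t * r t) • e) k)
    simp only [rate]
    linarith
  have hgap1 : 0 ≤ gap 1 := nonneg_of_hasDerivAt_mul one_pos hgap (by simp [gap])
    hrate.continuousAt hrate0 hmeet
  simpa [gap, r] using hgap1

theorem shannonEntropy_softmax_smul_single_le (k : ι) {L : ℝ} (hL : 0 ≤ L)
    (hvar : weightedVariance (softmax 0) u ≤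
      L ^ 2 * weightedVariance (softmax 0) (Pi.single k 1)) :
    shannonEntropy (softmax (L • Pi.single k 1)) ≤ shannonEntropy (softmax u) := by
  have hcont : Continuous fun d : ℝ ↦
      shannonEntropy (softmax (d • (Pi.single k 1 : ι → ℝ))) :=
    continuous_iff_continuousAt.2 fun d ↦
      (hasDerivAt_shannonEntropy_softmax_smul _ d).continuousAt
  refine le_of_tendsto ((hcont.tendsto L).mono_left (nhdsWithin_le_nhds (s := Set.Ioi L))) ?_
  filter_upwards [self_mem_nhdsWithin] with d hd
  obtain ⟨c, hLc, hcd⟩ := exists_between (Set.mem_Ioi.1 hd)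
  refine shannonEntropy_softmax_smul_single_le_of_variance_lt k (hL.trans_lt hLc) hcd
    (hvar.trans_lt ?_)
  have hpos := weightedVariance_softmax_single_one_pos 0 k
  gcongr

end Comparison

end SoftmaxEntropy

theorem lm_head_entropy_lower_bound_general {ι : Type*} [Fintype ι] [Nontrivial ι]
    {u : ι → ℝ} {m R : ℝ} (hu : √(∑ i, (u i - m) ^ 2) ≤ R) :
    log (1 + (Fintype.card ι - 1) * exp (-R * √(Fintype.card ι / (Fintype.card ι - 1)))) +
        R * exp (-R * √(Fintype.card ι / (Fintype.card ι - 1))) *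
          √(Fintype.card ι * (Fintype.card ι - 1)) /
          (1 + (Fintype.card ι - 1) *
            exp (-R * √(Fintype.card ι / (Fintype.card ι - 1)))) ≤
      shannonEntropy (softmax u) := by
  classical
  obtain ⟨k⟩ := (inferInstance : Nonempty ι)
  have hV : (1 : ℝ) < Fintype.card ι := by exact_mod_cast Fintype.one_lt_card
  set V : ℝ := (Fintype.card ι : ℝ)
  have hN : 0 < V - 1 := sub_pos.2 hV
  have hR : 0 ≤ R := (sqrt_nonneg _).trans hu
  have hvar : weightedVariance (softmax 0) u ≤
      (R * √(V / (V - 1))) ^ 2 * weightedVariance (softmax 0) (Pi.single k 1) := by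
    rw [weightedVariance_softmax_zero_single]
    calc weightedVariance (softmax 0) u ≤ (∑ i, (u i - m) ^ 2) / V :=
          weightedVariance_softmax_zero_le u m
      _ ≤ R ^ 2 / V := by
          gcongr
          exact (sqrt_le_left hR).1 hu
      _ = (R * √(V / (V - 1))) ^ 2 * ((V - 1) / V ^ 2) := by
          rw [mul_pow, sq_sqrt (by positivity)]
          field_simp
  have hsqrt : √(V * (V - 1)) = (V - 1) * √(V / (V - 1)) := by
    rw [show V * (V - 1) = (V - 1) ^ 2 * (V / (V - 1)) by field_simp,
      sqrt_mul (sq_nonneg _), sqrt_sq hN.le]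
  have hentropy := shannonEntropy_softmax_smul_single_le k (by positivity) hvar
  rw [smul_single_one, shannonEntropy_softmax_single] at hentropy
  convert hentropy using 2
  · rw [neg_mul]
  · rw [hsqrt, neg_mul]
    ring

/-- Theorem 4.2 (LM-head entropy lower bound): if `‖u‖₂ ≤ ρ√D`, then the
Shannon entropy of `softmax u` is at least
`log(1 + (V-1)γ) + ργ√(DV(V-1)) / (1 + (V-1)γ)` where
`γ = exp(-ρ√(DV/(V-1)))`. -/
theorem lm_head_entropy_lower_bound (V D : ℕ) (hV : 2 ≤ V) (hD : 1 ≤ D)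
    (ρ : ℝ) (hρ : 0 < ρ) (u : Fin V → ℝ)
    (hu : Real.sqrt (∑ i, u i ^ 2) ≤ ρ * Real.sqrt D) :
    -(∑ i, (Real.exp (u i) / ∑ j, Real.exp (u j)) *
        Real.log (Real.exp (u i) / ∑ j, Real.exp (u j))) ≥
      Real.log (1 + ((V : ℝ) - 1) *
          Real.exp (-ρ * Real.sqrt ((D : ℝ) * V / ((V : ℝ) - 1)))) +
        ρ * Real.exp (-ρ * Real.sqrt ((D : ℝ) * V / ((V : ℝ) - 1))) *
          Real.sqrt ((D : ℝ) * V * ((V : ℝ) - 1)) /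
          (1 + ((V : ℝ) - 1) *
            Real.exp (-ρ * Real.sqrt ((D : ℝ) * V / ((V : ℝ) - 1)))) := by
  have : Nontrivial (Fin V) := Fin.nontrivial_iff_two_le.2 hV
  have hbound := lm_head_entropy_lower_bound_general (m := 0) (by simpa using hu)
  rw [mul_div_assoc (D : ℝ), mul_assoc (D : ℝ), sqrt_mul D.cast_nonneg, sqrt_mul D.cast_nonneg]
  simpa only [shannonEntropy, softmax, Fintype.card_fin, mul_assoc, mul_left_comm, neg_mul]
    using hbound
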